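/- arXiv:2005.00797 — 2 statements merged into one kernel-verified Lean document; each statement's English description precedes it below -/
import Mathlib

section
/- (Lemma 4, location of the Perron root) Let q ≥ 1 and 0 < ρ ≤ 1/(2(21q + 6q² + 1)(3 + 2q)), and let A be the 3×3 real matrix with rows (2ρ, ρ, 2ρq), (1, 0, q), (7+2q, ρ, ρ(1+2ρq)). Then the characteristic polynomial p(ζ) := det(ζI₃ − A) satisfies p(√ρ) < 0; consequently A has a real eigenvalue λ with √ρ < λ ≤ 1/2. -/
open scoped BigOperators

/-!
Write `b` and `c` for the first and last entries of the third row of `A`. The determinant collects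
to `p(x) = x³ - (2ρ + c)x² - ρ(1 + q)x - ρ(qb - c)(1 + 2x)`. At `x = √ρ` the cubic term cancels
against the linear one, leaving `p(√ρ) = -ρ(q(b + √ρ) + 2√ρ(√ρ + qb - c))`, which is negative as
soon as `c < √ρ + qb`. At `x = 1/2` every term other than `1/8` carries a factor `ρ`, and a bound
on `ρ` of order `1/q²` makes them small, so `p` has a root in between.
-/

section CommRing

variable {R : Type*} [CommRing R]

/-- The matrix `A` of the theorem, whose root beyond `√ρ` is to be located. The entries `b` and `c`,
equal to `7 + 2q` and `ρ(1 + 2ρq)` in the theorem, are left free, since their values matter only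
through inequalities. -/
def perronMatrix (q ρ b c : R) : Matrix (Fin 3) (Fin 3) R :=
  !![2 * ρ, ρ, 2 * ρ * q;
     1, 0, q;
     b, ρ, c]

theorem eval_charpoly_perronMatrix (q ρ b c x : R) :
    (perronMatrix q ρ b c).charpoly.eval x =
      x ^ 3 - (2 * ρ + c) * x ^ 2 - ρ * (1 + q) * x - ρ * (q * b - c) * (1 + 2 * x) := by
  rw [Matrix.eval_charpoly, Matrix.det_fin_three]
  simp only [perronMatrix, Matrix.scalar_apply, Matrix.sub_apply, Matrix.diagonal_apply,
    Matrix.of_apply, Matrix.cons_val, Fin.isValue, Fin.reduceEq, ↓reduceIte]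
  ring

theorem eval_charpoly_perronMatrix_sq (q s b c : R) :
    (perronMatrix q (s ^ 2) b c).charpoly.eval s =
      -(s ^ 2 * (q * (b + s) + 2 * s * (s + q * b - c))) := by
  rw [eval_charpoly_perronMatrix]
  ring

end CommRing

theorem eval_charpoly_perronMatrix_sqrt_neg {q ρ b c : ℝ} (hq : 0 ≤ q) (hρ : 0 < ρ) (hb : 0 ≤ b)
    (hc : c < √ρ + q * b) : (perronMatrix q ρ b c).charpoly.eval √ρ < 0 := by
  have hgap : 0 < 2 * √ρ * (√ρ + q * b - c) :=
    mul_pos (mul_pos two_pos (Real.sqrt_pos.2 hρ)) (sub_pos.2 hc)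
  have hsum : 0 < q * (b + √ρ) + 2 * √ρ * (√ρ + q * b - c) :=
    add_pos_of_nonneg_of_pos (by positivity) hgap
  calc (perronMatrix q ρ b c).charpoly.eval √ρ
      = -(ρ * (q * (b + √ρ) + 2 * √ρ * (√ρ + q * b - c))) := by
        simpa only [Real.sq_sqrt hρ.le] using eval_charpoly_perronMatrix_sq q √ρ b c
    _ < 0 := neg_neg_of_pos (mul_pos hρ hsum)

theorem eval_charpoly_perronMatrix_half_pos {q ρ b c : ℝ}
    (h : 2 * c + 4 * ρ * (2 + q) + 16 * ρ * (q * b - c) < 1) :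
    0 < (perronMatrix q ρ b c).charpoly.eval (1 / 2) := by
  rw [eval_charpoly_perronMatrix]
  linarith

theorem statement_15_general {q ρ : ℝ} (hq : 0 ≤ q) (hρ0 : 0 < ρ)
    (hρ : ρ ≤ 1 / (10 + 117 * q + 32 * q ^ 2)) :
    (perronMatrix q ρ (7 + 2 * q) (ρ * (1 + 2 * ρ * q))).charpoly.eval √ρ < 0 ∧
      ∃ lam ∈ Set.Ioo √ρ (1 / 2),
        (perronMatrix q ρ (7 + 2 * q) (ρ * (1 + 2 * ρ * q))).charpoly.IsRoot lam := by
  rw [le_div_iff₀ (by positivity)] at hρ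
  have hρq : 0 ≤ ρ * q := mul_nonneg hρ0.le hq
  have hρ_small : ρ ≤ 1 / 10 := by linarith [mul_nonneg hρq hq]
  have hρ_lt_sqrt : ρ < √ρ := Real.lt_sqrt_of_sq_lt (by nlinarith)
  have hsqrt_lt_half : √ρ < 1 / 2 := (Real.sqrt_lt' (by norm_num)).2 (by linarith)
  have hρρq : ρ * (ρ * q) ≤ 1 / 10 * (ρ * q) := mul_le_mul_of_nonneg_right hρ_small hρq
  have hcorner : ρ * (1 + 2 * ρ * q) < √ρ + q * (7 + 2 * q) := by
    linarith [sq_nonneg q, mul_le_mul_of_nonneg_right hρ_small hq]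
  have hhalf : 2 * (ρ * (1 + 2 * ρ * q)) + 4 * ρ * (2 + q) +
      16 * ρ * (q * (7 + 2 * q) - ρ * (1 + 2 * ρ * q)) < 1 := by
    linarith [mul_pos hρ0 hρ0, mul_nonneg (mul_nonneg hρ0.le hρ0.le) hρq]
  have hneg := eval_charpoly_perronMatrix_sqrt_neg hq hρ0 (by positivity) hcorner
  exact ⟨hneg, intermediate_value_Ioo hsqrt_lt_half.le (Polynomial.continuous _).continuousOn
    ⟨hneg, eval_charpoly_perronMatrix_half_pos hhalf⟩⟩

theorem one_div_cubic_le_one_div_quadratic {q : ℝ} (hq : 1 ≤ q) :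
    1 / (2 * (21 * q + 6 * q ^ 2 + 1) * (3 + 2 * q)) ≤ 1 / (10 + 117 * q + 32 * q ^ 2) := by
  have hq0 : 0 ≤ q := zero_le_one.trans hq
  refine one_div_le_one_div_of_le (by positivity) ?_
  linarith [pow_nonneg hq0 2, pow_nonneg hq0 3]

/-- Lemma 4, location of the Perron root: the characteristic polynomial
of `A` is negative at `√ρ`, hence `A` has a real eigenvalue in `(√ρ, 1/2]`. -/
theorem statement_15 (q ρ : ℝ) (hq : 1 ≤ q) (hρ0 : 0 < ρ)
    (hρ : ρ ≤ 1 / (2 * (21 * q + 6 * q ^ 2 + 1) * (3 + 2 * q)))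
    (A : Matrix (Fin 3) (Fin 3) ℝ)
    (hA : A = !![2 * ρ, ρ, 2 * ρ * q;
                 1, 0, q;
                 7 + 2 * q, ρ, ρ * (1 + 2 * ρ * q)]) :
    (A.charpoly).eval (Real.sqrt ρ) < 0 ∧
      ∃ lam : ℝ, Real.sqrt ρ < lam ∧ lam ≤ 1 / 2 ∧ (A.charpoly).IsRoot lam := by
  obtain ⟨hneg, lam, ⟨hlt, hlt_half⟩, hroot⟩ := statement_15_general (zero_le_one.trans hq) hρ0
    (hρ.trans (one_div_cubic_le_one_div_quadratic hq))
  exact hA ▸ ⟨hneg, lam, hlt, hlt_half.le, hroot⟩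
end

section
/- (Lemma 4, eigenvector bounds) Let q ≥ 1 and ρ > 0, let A be the 3×3 real matrix with rows (2ρ, ρ, 2ρq), (1, 0, q), (7+2q, ρ, ρ(1+2ρq)), and suppose v ∈ ℝ³ has strictly positive entries and satisfies Av = λ₁ v for some real λ₁ with √ρ < λ₁ ≤ 1/2. Then v(1) ≤ v(3)/(2(7+2q)) and v(2) ≤ (1/(2√ρ(7+2q)) + q/√ρ) · v(3). -/
open scoped BigOperators

/-! Since `A` and `v` are nonnegative, the single term `(7 + 2 * q) * v 0` is at most the third
entry of `A v`, which is `lam1 * v 2 ≤ v 2 / 2`. This bounds `v 0`; the second row expresses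
`lam1 * v 1` through `v 0` and `v 2`, and `√ρ ≤ lam1` turns this into the bound on `v 1`. -/

theorem mul_apply_le_mulVec_apply {m n R : Type*} [Fintype n] [Semiring R] [PartialOrder R]
    [IsOrderedRing R] {A : Matrix m n R} {v : n → R} {i : m}
    (hA : ∀ k, 0 ≤ A i k) (hv : ∀ k, 0 ≤ v k) (j : n) :
    A i j * v j ≤ A.mulVec v i :=
  Finset.single_le_sum (f := fun k ↦ A i k * v k)
    (fun k _ ↦ mul_nonneg (hA k) (hv k)) (Finset.mem_univ j)

theorem apply_le_div_of_mulVec_apply_le {m n K : Type*} [Fintype n] [Field K] [LinearOrder K]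
    [IsStrictOrderedRing K] {A : Matrix m n K} {v : n → K} {i : m} {j : n} {b : K}
    (hA : ∀ k, 0 ≤ A i k) (hv : ∀ k, 0 ≤ v k) (hij : 0 < A i j) (hb : A.mulVec v i ≤ b) :
    v j ≤ b / A i j :=
  (le_div_iff₀' hij).mpr ((mul_apply_le_mulVec_apply hA hv j).trans hb)

theorem apply_le_mulVec_apply_div {n K : Type*} [Fintype n] [Field K] [LinearOrder K]
    [IsStrictOrderedRing K] {A : Matrix n n K} {v : n → K} {i : n} {s μ : K}
    (heig : A.mulVec v = μ • v) (hv : 0 ≤ v i) (hs : 0 < s) (hsμ : s ≤ μ) :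
    v i ≤ A.mulVec v i / s := by
  rw [le_div_iff₀' hs, heig]
  exact mul_le_mul_of_nonneg_right hsμ hv

theorem statement_16_general {q ρ : ℝ} (hq : 0 ≤ q) (hρ : 0 < ρ)
    {A : Matrix (Fin 3) (Fin 3) ℝ}
    (hA : A = !![2 * ρ, ρ, 2 * ρ * q;
                 1, 0, q;
                 7 + 2 * q, ρ, ρ * (1 + 2 * ρ * q)])
    {v : Fin 3 → ℝ} (hv : ∀ i, 0 ≤ v i)
    {lam1 : ℝ} (heig : A.mulVec v = lam1 • v)
    (hlow : Real.sqrt ρ ≤ lam1) (hup : lam1 ≤ 1 / 2) :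
    v 0 ≤ v 2 / (2 * (7 + 2 * q)) ∧
      v 1 ≤ (1 / (2 * Real.sqrt ρ * (7 + 2 * q)) + q / Real.sqrt ρ) * v 2 := by
  have hs : 0 < Real.sqrt ρ := Real.sqrt_pos.mpr hρ
  have hA20 : A 2 0 = 7 + 2 * q := by simp [hA]
  have hA20_pos : 0 < A 2 0 := by rw [hA20]; positivity
  have row_nonneg : ∀ k, 0 ≤ A 2 k := by
    have hA21 : 0 ≤ A 2 1 := by simpa [hA] using hρ.le
    have hA22 : 0 ≤ A 2 2 := by
      rw [show A 2 2 = ρ * (1 + 2 * ρ * q) by simp [hA]]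
      positivity
    exact Fin.forall_fin_succ.mpr ⟨hA20_pos.le, Fin.forall_fin_two.mpr ⟨hA21, hA22⟩⟩
  have mulVec_two_le : A.mulVec v 2 ≤ v 2 / 2 := by
    rw [heig, Pi.smul_apply, smul_eq_mul, div_eq_inv_mul, ← one_div]
    exact mul_le_mul_of_nonneg_right hup (hv 2)
  have mulVec_one : A.mulVec v 1 = v 0 + q * v 2 := by
    simp [hA, Matrix.mulVec, dotProduct, Fin.sum_univ_three]
  have v0_le : v 0 ≤ v 2 / (2 * (7 + 2 * q)) := by
    rw [← div_div, ← hA20]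
    exact apply_le_div_of_mulVec_apply_le row_nonneg hv hA20_pos mulVec_two_le
  refine ⟨v0_le, ?_⟩
  calc v 1 ≤ A.mulVec v 1 / Real.sqrt ρ := apply_le_mulVec_apply_div heig (hv 1) hs hlow
    _ = (v 0 + q * v 2) / Real.sqrt ρ := by rw [mulVec_one]
    _ ≤ (v 2 / (2 * (7 + 2 * q)) + q * v 2) / Real.sqrt ρ := by gcongr
    _ = (1 / (2 * Real.sqrt ρ * (7 + 2 * q)) + q / Real.sqrt ρ) * v 2 := by field_simp

/-- Lemma 4, eigenvector bounds: bounds on the entries of a positive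
eigenvector of `A` associated with an eigenvalue `λ₁ ∈ (√ρ, 1/2]`. -/
theorem statement_16 (q ρ : ℝ) (hq : 1 ≤ q) (hρ0 : 0 < ρ)
    (A : Matrix (Fin 3) (Fin 3) ℝ)
    (hA : A = !![2 * ρ, ρ, 2 * ρ * q;
                 1, 0, q;
                 7 + 2 * q, ρ, ρ * (1 + 2 * ρ * q)])
    (v : Fin 3 → ℝ) (hv : ∀ i, 0 < v i)
    (lam1 : ℝ) (heig : A.mulVec v = lam1 • v)
    (hlow : Real.sqrt ρ < lam1) (hup : lam1 ≤ 1 / 2) :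
    v 0 ≤ v 2 / (2 * (7 + 2 * q)) ∧
      v 1 ≤ (1 / (2 * Real.sqrt ρ * (7 + 2 * q)) + q / Real.sqrt ρ) * v 2 :=
  statement_16_general (zero_le_one.trans hq) hρ0 hA (fun i ↦ (hv i).le) heig hlow.le hup
end
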